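/- Let θ ∈ (0, 2) be a real number and let x_1, ..., x_n be independent Bernoulli random variables with E[x_1 + ... + x_n] = 2θ. Then (1/2)·E[min(x_1 + ... + x_n, 2)] ≥ 1 − (1 + θ)·e^{-2θ}. -/

import Mathlib

/-!
We model a family of `n` independent Bernoulli random variables with means
`p : Fin n → ℝ` by their joint (product) distribution on `Fin n → Bool`:
the outcome `ω` has probability `∏ i, (if ω i then p i else 1 - p i)`.
-/

/-- number of successes in outcome `ω` -/
def bCount {n : ℕ} (ω : Fin n → Bool) : ℕ := ∑ i, if ω i then 1 else 0

/-- joint probability of the outcome `ω` for independent Bernoulli variables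
with means `p` -/
noncomputable def bernWeight {n : ℕ} (p : Fin n → ℝ) (ω : Fin n → Bool) : ℝ :=
  ∏ i, if ω i then p i else 1 - p i

/-- expectation of `g(x_1 + ⋯ + x_n)` for independent Bernoulli variables `x_i`
with means `p` -/
noncomputable def bernExp {n : ℕ} (p : Fin n → ℝ) (g : ℕ → ℝ) : ℝ :=
  ∑ ω : Fin n → Bool, bernWeight p ω * g (bCount ω)

/-!
Write `S` for the number of successes and `s` for its mean. Since `min S 2 = 2 - (2 - S)⁺`, the
bound amounts to `E[(2 - S)⁺] ≤ (2 + s) e⁻ˢ`, whose right-hand side is the value of the left-hand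
side for a Poisson variable of mean `s`. Adding one more variable, of mean `t`, replaces
`E[(2 - S)⁺]` by `(1 - t) E[(2 - S)⁺] + t E[(1 - S)⁺]`, where `E[(1 - S)⁺] = ∏ (1 - pᵢ) ≤ e⁻ˢ`. By
induction the new value is at most `(2 + s) e⁻ˢ - t (1 + s) e⁻ˢ`. This is the value at `s + t` of
the tangent at `s` to the convex function `x ↦ (2 + x) e⁻ˣ` on `[0, ∞)`, hence at most
`(2 + s + t) e⁻⁽ˢ⁺ᵗ⁾`. The positive parts are encoded as truncated subtraction in `ℕ`.
-/

open Real

section BernExp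

variable {n : ℕ}

theorem bernExp_zero (p : Fin 0 → ℝ) (g : ℕ → ℝ) : bernExp p g = g 0 := by
  simp [bernExp, bernWeight, bCount]

theorem bernExp_succ (p : Fin (n + 1) → ℝ) (g : ℕ → ℝ) :
    bernExp p g = (1 - p 0) * bernExp (fun i => p i.succ) g
      + p 0 * bernExp (fun i => p i.succ) (fun c => g (c + 1)) := by
  unfold bernExp
  rw [← (Fin.consEquiv fun _ : Fin (n + 1) => Bool).sum_comp, Fintype.sum_prod_type,
    Fintype.sum_bool, add_comm]
  simp [Fin.consEquiv, bernWeight, bCount, Fin.prod_univ_succ, Fin.sum_univ_succ, Finset.mul_sum,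
    mul_assoc, add_comm]

theorem bernExp_add (p : Fin n → ℝ) (f g : ℕ → ℝ) :
    bernExp p (fun c => f c + g c) = bernExp p f + bernExp p g := by
  simp only [bernExp, mul_add, Finset.sum_add_distrib]

theorem bernExp_const (p : Fin n → ℝ) (a : ℝ) : bernExp p (fun _ => a) = a := by
  induction n with
  | zero => exact bernExp_zero p _
  | succ n ih => rw [bernExp_succ, ih]; ring

theorem bernExp_tsub_add_bernExp_min (p : Fin n → ℝ) (k : ℕ) :
    bernExp p (fun c => ((k - c : ℕ) : ℝ)) + bernExp p (fun c => ((min c k : ℕ) : ℝ)) = k := by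
  rw [← bernExp_add]
  simp only [← Nat.cast_add, min_comm _ k, tsub_add_min, bernExp_const]

theorem bernExp_one_tsub (p : Fin n → ℝ) :
    bernExp p (fun c => ((1 - c : ℕ) : ℝ)) = ∏ i, (1 - p i) := by
  induction n with
  | zero => simp [bernExp_zero]
  | succ n ih => simp [bernExp_succ, ih, Fin.prod_univ_succ, bernExp_const]

end BernExp

theorem prod_one_sub_le_exp_neg_sum {ι : Type*} (s : Finset ι) {p : ι → ℝ}
    (hp : ∀ i ∈ s, p i ≤ 1) : ∏ i ∈ s, (1 - p i) ≤ exp (-∑ i ∈ s, p i) := by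
  rw [← Finset.sum_neg_distrib, exp_sum]
  exact Finset.prod_le_prod (fun i hi => sub_nonneg.2 (hp i hi))
    fun i _ => one_sub_le_exp_neg (p i)

theorem two_sub_le_two_add_mul_exp_neg {t : ℝ} (ht : 0 ≤ t) : 2 - t ≤ (2 + t) * exp (-t) := by
  rcases lt_or_ge t 2 with ht₂ | ht₂
  · have hexp : exp t ≤ (2 + t) / (2 - t) := exp_le_two_add_div_two_sub ht ht₂
    rwa [exp_neg, ← div_eq_mul_inv, le_div_comm₀ (by linarith) (exp_pos t)]
  · exact (sub_nonpos.2 ht₂).trans (by positivity)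

theorem tangent_two_add_mul_exp_neg_le {s t : ℝ} (hs : 0 ≤ s) (ht : 0 ≤ t) :
    (2 + s - t * (1 + s)) * exp (-s) ≤ (2 + (t + s)) * exp (-(t + s)) := by
  calc (2 + s - t * (1 + s)) * exp (-s)
      = ((2 - t) + s * (1 - t)) * exp (-s) := by ring
    _ ≤ ((2 + t) * exp (-t) + s * exp (-t)) * exp (-s) := by
        gcongr
        exacts [two_sub_le_two_add_mul_exp_neg ht, one_sub_le_exp_neg t]
    _ = (2 + (t + s)) * exp (-(t + s)) := by rw [neg_add, exp_add]; ring

theorem bernExp_two_tsub_le {n : ℕ} (p : Fin n → ℝ) (hp₀ : ∀ i, 0 ≤ p i) (hp₁ : ∀ i, p i ≤ 1) :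
    bernExp p (fun c => ((2 - c : ℕ) : ℝ)) ≤ (2 + ∑ i, p i) * exp (-∑ i, p i) := by
  induction n with
  | zero => simp [bernExp_zero]
  | succ n ih =>
    rw [bernExp_succ, Fin.sum_univ_succ]
    simp only [Nat.reduceSubDiff]
    set q : Fin n → ℝ := fun i => p i.succ
    set s := ∑ i, q i
    have htwo : bernExp q (fun c => ((2 - c : ℕ) : ℝ)) ≤ (2 + s) * exp (-s) :=
      ih q (fun i => hp₀ i.succ) fun i => hp₁ i.succ
    have hone : bernExp q (fun c => ((1 - c : ℕ) : ℝ)) ≤ exp (-s) :=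
      (bernExp_one_tsub q).trans_le (prod_one_sub_le_exp_neg_sum _ fun i _ => hp₁ (Fin.succ i))
    calc (1 - p 0) * bernExp q (fun c => ((2 - c : ℕ) : ℝ))
          + p 0 * bernExp q (fun c => ((1 - c : ℕ) : ℝ))
        ≤ (1 - p 0) * ((2 + s) * exp (-s)) + p 0 * exp (-s) := by
          gcongr
          exacts [sub_nonneg.2 (hp₁ 0), hp₀ 0]
      _ = (2 + s - p 0 * (1 + s)) * exp (-s) := by ring
      _ ≤ (2 + (p 0 + s)) * exp (-(p 0 + s)) :=
          tangent_two_add_mul_exp_neg_le (Finset.sum_nonneg fun i _ => hp₀ (Fin.succ i)) (hp₀ 0)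

theorem bernoulli_min_two_expectation_lower_bound_general (n : ℕ) (θ : ℝ) (μ : Fin n → ℝ)
    (hμ : ∀ i, 0 ≤ μ i ∧ μ i ≤ 1) (hsum : ∑ i, μ i = 2 * θ) :
    1 - (1 + θ) * Real.exp (-(2 * θ)) ≤
      (1 / 2 : ℝ) * bernExp μ (fun c => ((min c 2 : ℕ) : ℝ)) := by
  have hdeficit := bernExp_two_tsub_le μ (fun i => (hμ i).1) fun i => (hμ i).2
  have htotal := bernExp_tsub_add_bernExp_min μ 2
  rw [hsum] at hdeficit
  rw [Nat.cast_ofNat] at htotal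
  linarith

/-- For `θ ∈ (0, 2)` and independent Bernoulli variables
`x_1, …, x_n` with means `μ_i ∈ [0,1]` summing to `2θ`, we have
`(1/2)·E[min(∑ x_i, 2)] ≥ 1 − (1 + θ)·e^{-2θ}`. -/
theorem bernoulli_min_two_expectation_lower_bound (n : ℕ) (θ : ℝ)
    (hθ0 : 0 < θ) (hθ2 : θ < 2) (μ : Fin n → ℝ)
    (hμ : ∀ i, 0 ≤ μ i ∧ μ i ≤ 1) (hsum : ∑ i, μ i = 2 * θ) :
    1 - (1 + θ) * Real.exp (-(2 * θ)) ≤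
      (1 / 2 : ℝ) * bernExp μ (fun c => ((min c 2 : ℕ) : ℝ)) :=
  bernoulli_min_two_expectation_lower_bound_general n θ μ hμ hsum
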